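/- Let U ⊆ E be open, let φ : E → ℝ satisfy ContDiffOn ℝ 2 φ U, and assume the gradient has constant nonzero norm on U: there is c > 0 with ‖∇φ x‖ = c for all x ∈ U. Then the following are equivalent: (i) φ is a critical point of the total-norm functional under compactly supported variations, i.e. for every test function ψ on U the function t ↦ ∫ x in tsupport ψ, ‖∇φ x + t • ∇ψ x‖ has derivative 0 at t = 0 (HasDerivAt _ 0 0); (ii) φ satisfies the Laplace equation on U: Δφ x = 0 for every x ∈ U. -/

import Mathlib

open MeasureTheory RealInnerProductSpace

/-!
The derivative of `t ↦ ∫ ‖∇φ + t • ∇ψ‖` at `0` is `∫ ⟪∇φ / ‖∇φ‖, ∇ψ⟫`, and integration by parts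
turns this into `-∫ ψ * div (∇φ / ‖∇φ‖)`. Hence, where `∇φ` does not vanish, the Euler–Lagrange
equation of the total norm is `div (∇φ / ‖∇φ‖) = 0`. If moreover `‖∇φ‖` is a constant `c`, its
left-hand side is `c⁻¹ * Δφ`.
-/

open scoped ContDiff Gradient Laplacian

section FirstVariation

variable {F : Type*} [NormedAddCommGroup F] [InnerProductSpace ℝ F]

theorem hasDerivAt_norm_of_ne_zero {γ : ℝ → F} {γ' : F} {t : ℝ} (hγ : HasDerivAt γ γ' t)
    (hne : γ t ≠ 0) : HasDerivAt (fun s => ‖γ s‖) ⟪‖γ t‖⁻¹ • γ t, γ'⟫ t := by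
  have hsqrt := hγ.norm_sq.sqrt (by simpa using hne)
  simp only [Real.sqrt_sq (norm_nonneg _)] at hsqrt
  rwa [mul_div_mul_left _ _ two_ne_zero, div_eq_inv_mul, ← real_inner_smul_left] at hsqrt

theorem lipschitzWith_norm_add_smul (v w : F) :
    LipschitzWith ‖w‖₊ (fun t : ℝ => ‖v + t • w‖) := by
  refine LipschitzWith.of_dist_le_mul fun s t => ?_
  calc |‖v + s • w‖ - ‖v + t • w‖|
    _ ≤ ‖(v + s • w) - (v + t • w)‖ := abs_norm_sub_norm_le _ _
    _ = ‖(s - t) • w‖ := by rw [add_sub_add_left_eq_sub, sub_smul]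
    _ = ‖w‖ * dist s t := by rw [norm_smul, mul_comm, Real.dist_eq, Real.norm_eq_abs]

theorem hasDerivAt_integral_norm_add_smul {X : Type*} [MeasurableSpace X] {μ : Measure X}
    {v w : X → F} (hv : Integrable v μ) (hw : Integrable w μ) (hne : ∀ᵐ x ∂μ, v x ≠ 0) :
    HasDerivAt (fun t : ℝ => ∫ x, ‖v x + t • w x‖ ∂μ) (∫ x, ⟪‖v x‖⁻¹ • v x, w x⟫ ∂μ) 0 := by
  have hint (t : ℝ) : Integrable (fun x => ‖v x + t • w x‖) μ := (hv.add (hw.smul t)).norm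
  have hmeas : AEStronglyMeasurable (fun x => ⟪‖v x‖⁻¹ • v x, w x⟫) μ :=
    (hv.1.norm.inv₀.smul hv.1).inner hw.1
  have hderiv {x : X} (hx : v x ≠ 0) :
      HasDerivAt (fun t : ℝ => ‖v x + t • w x‖) ⟪‖v x‖⁻¹ • v x, w x⟫ 0 := by
    have hline : HasDerivAt (fun t : ℝ => v x + t • w x) (w x) 0 := by
      simpa using ((hasDerivAt_id (0 : ℝ)).smul_const (w x)).const_add (v x)
    simpa using hasDerivAt_norm_of_ne_zero hline (by simpa using hx)
  refine (hasDerivAt_integral_of_dominated_loc_of_lip Filter.univ_mem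
    (.of_forall fun t => (hint t).1) (hint 0) hmeas (.of_forall fun x => ?_) hw.norm
    (hne.mono fun x hx => hderiv hx)).2
  have hlip : LipschitzWith (Real.nnabs ‖w x‖) (fun t : ℝ => ‖v x + t • w x‖) := by
    simpa using lipschitzWith_norm_add_smul (v x) (w x)
  exact hlip.lipschitzOnWith

end FirstVariation

theorem integrable_mul_of_continuousOn_tsupport {X R : Type*} [TopologicalSpace X]
    [MeasurableSpace X] [OpensMeasurableSpace X] {μ : Measure X} [IsFiniteMeasureOnCompacts μ]
    [NormedRing R] {f g : X → R} (hf : ContinuousOn f (tsupport g)) (hg : Continuous g)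
    (hgc : HasCompactSupport g) : Integrable (fun x => f x * g x) μ :=
  (integrableOn_iff_integrable_of_support_subset
    ((Function.support_mul_subset_right f g).trans (subset_tsupport g))).1
    ((hf.mul hg.continuousOn).integrableOn_compact' hgc (isClosed_tsupport g).measurableSet)

section IntegrationByParts

variable {E : Type*} [NormedAddCommGroup E] [NormedSpace ℝ E] [MeasurableSpace E] [BorelSpace E]
  {μ : Measure E} {U : Set E} {f ψ : E → ℝ}

theorem integrable_mul_fderiv_apply [IsFiniteMeasureOnCompacts μ]
    (hf : ContinuousOn f (tsupport ψ)) (hψ : ContDiff ℝ 1 ψ) (hψc : HasCompactSupport ψ) (v : E) :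
    Integrable (fun x => f x * fderiv ℝ ψ x v) μ :=
  integrable_mul_of_continuousOn_tsupport (hf.mono (tsupport_fderiv_apply_subset ℝ v))
    ((hψ.continuous_fderiv one_ne_zero).clm_apply continuous_const) (hψc.fderiv_apply ℝ v)

theorem integrable_fderiv_apply_mul [IsFiniteMeasureOnCompacts μ] (hU : IsOpen U)
    (hf : ContDiffOn ℝ 1 f U) (hψ : Continuous ψ) (hψc : HasCompactSupport ψ)
    (hψU : tsupport ψ ⊆ U) (v : E) : Integrable (fun x => fderiv ℝ f x v * ψ x) μ :=
  integrable_mul_of_continuousOn_tsupport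
    (((hf.continuousOn_fderiv_of_isOpen hU le_rfl).clm_apply continuousOn_const).mono hψU) hψ hψc

theorem integral_mul_fderiv_apply_eq_neg_of_tsupport_subset [FiniteDimensional ℝ E]
    [μ.IsAddHaarMeasure] (hU : IsOpen U) (hf : ContDiffOn ℝ 1 f U) (hψ : ContDiff ℝ 1 ψ)
    (hψc : HasCompactSupport ψ) (hψU : tsupport ψ ⊆ U) (v : E) :
    ∫ x, f x * fderiv ℝ ψ x v ∂μ = -∫ x, fderiv ℝ f x v * ψ x ∂μ :=
  integral_mul_fderiv_eq_neg_fderiv_mul_of_integrable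
    (integrable_fderiv_apply_mul hU hf hψ.continuous hψc hψU v)
    (integrable_mul_fderiv_apply (hf.continuousOn.mono hψU) hψ hψc v)
    (integrable_mul_of_continuousOn_tsupport (hf.continuousOn.mono hψU) hψ.continuous hψc)
    (fun _ hx => (hf.differentiableOn one_ne_zero).differentiableAt (hU.mem_nhds (hψU hx)))
    (fun x _ => hψ.differentiable one_ne_zero x)

end IntegrationByParts

theorem forall_integral_contDiff_smul_eq_zero_iff {E F : Type*} [NormedAddCommGroup E]
    [NormedSpace ℝ E] [FiniteDimensional ℝ E] [MeasurableSpace E] [BorelSpace E]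
    [NormedAddCommGroup F] [NormedSpace ℝ F] [CompleteSpace F] {μ : Measure E}
    [IsLocallyFiniteMeasure μ] [μ.IsOpenPosMeasure] {U : Set E} (hU : IsOpen U) {f : E → F}
    (hf : ContinuousOn f U) :
    (∀ ψ : E → ℝ, ContDiff ℝ ∞ ψ → HasCompactSupport ψ → tsupport ψ ⊆ U →
        ∫ x, ψ x • f x ∂μ = 0) ↔ ∀ x ∈ U, f x = 0 := by
  refine ⟨fun horth => ?_, fun hzero ψ _ _ hψU => ?_⟩
  · have hae : ∀ᵐ x ∂μ, x ∈ U → f x = 0 :=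
      hU.ae_eq_zero_of_integral_contDiff_smul_eq_zero
        (hf.locallyIntegrableOn hU.measurableSet) horth
    exact Measure.eqOn_open_of_ae_eq ((ae_restrict_iff' hU.measurableSet).2 hae) hU hf
      continuousOn_const
  · refine integral_eq_zero_of_ae (.of_forall fun x => ?_)
    by_cases hx : x ∈ tsupport ψ
    · simp [hzero x (hψU hx)]
    · simp [image_eq_zero_of_notMem_tsupport hx]

section Divergence

variable {E : Type*} [NormedAddCommGroup E] [NormedSpace ℝ E]

/-- The divergence of a vector field, encoded without coordinates as the trace of its derivative.
It is `0` where the field is not differentiable, and everywhere if `E` is infinite-dimensional. -/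
noncomputable def divergence (V : E → E) (x : E) : ℝ :=
  LinearMap.trace ℝ E (fderiv ℝ V x : E →ₗ[ℝ] E)

theorem divergence_congr_of_eventuallyEq {V W : E → E} {x : E} (h : V =ᶠ[nhds x] W) :
    divergence V x = divergence W x := by
  rw [divergence, divergence, h.fderiv_eq]

theorem divergence_const_smul (c : ℝ) (V : E → E) (x : E) :
    divergence (c • V) x = c * divergence V x := by
  simp [divergence, fderiv_const_smul_field]

theorem continuousOn_divergence [FiniteDimensional ℝ E] {V : E → E} {U : Set E} (hU : IsOpen U)
    (hV : ContDiffOn ℝ 1 V U) : ContinuousOn (divergence V) U :=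
  (LinearMap.trace ℝ E ∘ₗ ContinuousLinearMap.coeLM ℝ).continuous_of_finiteDimensional
    |>.comp_continuousOn (hV.continuousOn_fderiv_of_isOpen hU le_rfl)

end Divergence

theorem contDiffOn_inv_norm_smul {E F : Type*} [NormedAddCommGroup E] [NormedSpace ℝ E]
    [NormedAddCommGroup F] [InnerProductSpace ℝ F] {U : Set E} {V : E → F} {m : WithTop ℕ∞}
    (hV : ContDiffOn ℝ m V U) (hne : ∀ x ∈ U, V x ≠ 0) :
    ContDiffOn ℝ m (fun x => ‖V x‖⁻¹ • V x) U :=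
  ((hV.norm ℝ hne).inv fun x hx => norm_ne_zero_iff.2 (hne x hx)).smul hV

section Gradient

variable {E : Type*} [NormedAddCommGroup E] [InnerProductSpace ℝ E] [CompleteSpace E]
  {φ ψ : E → ℝ} {x : E}

theorem contDiffAt_gradient {m n : WithTop ℕ∞} (hφ : ContDiffAt ℝ n φ x) (hmn : m + 1 ≤ n) :
    ContDiffAt ℝ m (∇ φ) x :=
  -- `toDual` is conjugate-linear; conjugation on `ℝ` unfolds to the identity, so the ascription
  -- makes it linear and the smoothness of linear isometries applies.
  ((InnerProductSpace.toDual ℝ E).symm : StrongDual ℝ E ≃ₗᵢ[ℝ] E).contDiff.contDiffAt.comp x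
    (hφ.fderiv_right hmn)

theorem contDiffOn_gradient {m n : WithTop ℕ∞} {U : Set E} (hU : IsOpen U)
    (hφ : ContDiffOn ℝ n φ U) (hmn : m + 1 ≤ n) : ContDiffOn ℝ m (∇ φ) U := fun _ hx =>
  (contDiffAt_gradient (hφ.contDiffAt (hU.mem_nhds hx)) hmn).contDiffWithinAt

theorem gradient_eq_zero_of_notMem_tsupport (hx : x ∉ tsupport ψ) : ∇ ψ x = 0 := by
  have hfderiv : fderiv ℝ ψ x = 0 :=
    image_eq_zero_of_notMem_tsupport fun h => hx (tsupport_fderiv_subset ℝ h)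
  rw [gradient, hfderiv, map_zero]

end Gradient

section OrthonormalCoordinates

variable {E : Type*} [NormedAddCommGroup E] [InnerProductSpace ℝ E] {φ : E → ℝ} {x : E}
  {ι : Type*} [Fintype ι] (b : OrthonormalBasis ι ℝ E)

theorem divergence_eq_sum_fderiv_inner {V : E → E} (hV : DifferentiableAt ℝ V x) :
    divergence V x = ∑ i, fderiv ℝ (fun y => ⟪V y, b i⟫) x (b i) := by
  rw [divergence, LinearMap.trace_eq_sum_inner _ b]
  refine Finset.sum_congr rfl fun i _ => ?_
  rw [fderiv_inner_apply ℝ hV (differentiableAt_const _)]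
  simp [real_inner_comm]

theorem laplacian_eq_sum_fderiv_fderiv [FiniteDimensional ℝ E] (hφ : ContDiffAt ℝ 2 φ x) :
    Δ φ x = ∑ i, fderiv ℝ (fun y => fderiv ℝ φ y (b i)) x (b i) := by
  have hfderiv : DifferentiableAt ℝ (fderiv ℝ φ) x :=
    (hφ.fderiv_right (m := 1) (by norm_num)).differentiableAt one_ne_zero
  rw [InnerProductSpace.laplacian_eq_iteratedFDeriv_orthonormalBasis φ b]
  refine Finset.sum_congr rfl fun i _ => ?_
  rw [iteratedFDeriv_two_apply, fderiv_clm_apply hfderiv (differentiableAt_const _)]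
  simp

end OrthonormalCoordinates

section TotalNorm

variable {E : Type*} [NormedAddCommGroup E] [InnerProductSpace ℝ E] [FiniteDimensional ℝ E]
  {φ ψ : E → ℝ} {U : Set E}

theorem divergence_gradient {x : E} (hφ : ContDiffAt ℝ 2 φ x) :
    divergence (∇ φ) x = Δ φ x := by
  have hgradient : DifferentiableAt ℝ (∇ φ) x :=
    (contDiffAt_gradient (m := 1) hφ (by norm_num)).differentiableAt one_ne_zero
  simp only [divergence_eq_sum_fderiv_inner (stdOrthonormalBasis ℝ E) hgradient,
    laplacian_eq_sum_fderiv_fderiv (stdOrthonormalBasis ℝ E) hφ, inner_gradient_left]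

theorem divergence_inv_norm_smul_gradient {c : ℝ} (hU : IsOpen U) (hφ : ContDiffOn ℝ 2 φ U)
    (hconst : ∀ x ∈ U, ‖∇ φ x‖ = c) {x : E} (hx : x ∈ U) :
    divergence (fun y => ‖∇ φ y‖⁻¹ • ∇ φ y) x = c⁻¹ * Δ φ x := by
  have hlocal : (fun y => ‖∇ φ y‖⁻¹ • ∇ φ y) =ᶠ[nhds x] c⁻¹ • ∇ φ :=
    (hU.eventually_mem hx).mono fun y hy => by simp only [hconst y hy, Pi.smul_apply]
  rw [divergence_congr_of_eventuallyEq hlocal, divergence_const_smul,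
    divergence_gradient (hφ.contDiffAt (hU.mem_nhds hx))]

variable [MeasurableSpace E] [BorelSpace E] {μ : Measure E}

theorem integral_inner_gradient_eq_neg_integral_mul_divergence [μ.IsAddHaarMeasure] {V : E → E}
    (hU : IsOpen U) (hV : ContDiffOn ℝ 1 V U) (hψ : ContDiff ℝ 1 ψ) (hψc : HasCompactSupport ψ)
    (hψU : tsupport ψ ⊆ U) :
    ∫ x, ⟪V x, ∇ ψ x⟫ ∂μ = -∫ x, ψ x * divergence V x ∂μ := by
  let b := stdOrthonormalBasis ℝ E
  have hcoord (i) : ContDiffOn ℝ 1 (fun y => ⟪V y, b i⟫) U := hV.inner ℝ contDiffOn_const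
  have hinner (x : E) : ⟪V x, ∇ ψ x⟫ = ∑ i, ⟪V x, b i⟫ * fderiv ℝ ψ x (b i) := by
    rw [← b.sum_inner_mul_inner]
    simp only [inner_gradient_right, conj_trivial]
  have hdiv (x : E) :
      ψ x * divergence V x = ∑ i, fderiv ℝ (fun y => ⟪V y, b i⟫) x (b i) * ψ x := by
    by_cases hx : x ∈ tsupport ψ
    · have hVx : DifferentiableAt ℝ V x :=
        (hV.differentiableOn one_ne_zero).differentiableAt (hU.mem_nhds (hψU hx))
      rw [divergence_eq_sum_fderiv_inner b hVx, mul_comm, Finset.sum_mul]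
    · simp [image_eq_zero_of_notMem_tsupport hx]
  simp only [hinner, hdiv]
  rw [integral_finsetSum _ fun i _ =>
      integrable_mul_fderiv_apply ((hcoord i).continuousOn.mono hψU) hψ hψc (b i),
    integral_finsetSum _ fun i _ =>
      integrable_fderiv_apply_mul hU (hcoord i) hψ.continuous hψc hψU (b i),
    ← Finset.sum_neg_distrib]
  exact Finset.sum_congr rfl fun i _ =>
    integral_mul_fderiv_apply_eq_neg_of_tsupport_subset hU (hcoord i) hψ hψc hψU (b i)

theorem hasDerivAt_setIntegral_norm_gradient_add_smul [μ.IsAddHaarMeasure] (hU : IsOpen U)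
    (hφ : ContDiffOn ℝ 2 φ U) (hne : ∀ x ∈ U, ∇ φ x ≠ 0) (hψ : ContDiff ℝ 1 ψ)
    (hψc : HasCompactSupport ψ) (hψU : tsupport ψ ⊆ U) :
    HasDerivAt (fun t : ℝ => ∫ x in tsupport ψ, ‖∇ φ x + t • ∇ ψ x‖ ∂μ)
      (-∫ x, ψ x * divergence (fun y => ‖∇ φ y‖⁻¹ • ∇ φ y) x ∂μ) 0 := by
  have hgradφ : ContDiffOn ℝ 1 (∇ φ) U := contDiffOn_gradient hU hφ (by norm_num)
  have hgradψ : Continuous (∇ ψ) := continuous_iff_continuousAt.2 fun x =>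
    (contDiffAt_gradient (m := 0) hψ.contDiffAt (by norm_num)).continuousAt
  have hvar := hasDerivAt_integral_norm_add_smul
    ((hgradφ.continuousOn.mono hψU).integrableOn_compact (μ := μ) hψc)
    (hgradψ.continuousOn.integrableOn_compact hψc)
    ((ae_restrict_mem (isClosed_tsupport ψ).measurableSet).mono fun x hx => hne x (hψU hx))
  rwa [setIntegral_eq_integral_of_forall_compl_eq_zero fun x hx => by
      rw [gradient_eq_zero_of_notMem_tsupport hx, inner_zero_right],
    integral_inner_gradient_eq_neg_integral_mul_divergence hU (contDiffOn_inv_norm_smul hgradφ hne)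
      hψ hψc hψU] at hvar

/-- Being a critical point of the total norm `∫ ‖∇φ‖ ∂μ` under variations compactly supported in
`U`. For each variation `ψ` the integral extends over `tsupport ψ` only: outside it the integrand
does not depend on `t`, and over all of `U` the total norm may be infinite. -/
def IsTotalNormCriticalOn (μ : Measure E) (φ : E → ℝ) (U : Set E) : Prop :=
  ∀ ψ : E → ℝ, ContDiff ℝ ∞ ψ → HasCompactSupport ψ → tsupport ψ ⊆ U →
    HasDerivAt (fun t : ℝ => ∫ x in tsupport ψ, ‖∇ φ x + t • ∇ ψ x‖ ∂μ) 0 0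

theorem isTotalNormCriticalOn_iff_divergence_eq_zero [μ.IsAddHaarMeasure] (hU : IsOpen U)
    (hφ : ContDiffOn ℝ 2 φ U) (hne : ∀ x ∈ U, ∇ φ x ≠ 0) :
    IsTotalNormCriticalOn μ φ U ↔
      ∀ x ∈ U, divergence (fun y => ‖∇ φ y‖⁻¹ • ∇ φ y) x = 0 := by
  have hdiv : ContinuousOn (divergence fun y => ‖∇ φ y‖⁻¹ • ∇ φ y) U :=
    continuousOn_divergence hU
      (contDiffOn_inv_norm_smul (contDiffOn_gradient hU hφ (by norm_num)) hne)
  rw [← forall_integral_contDiff_smul_eq_zero_iff (μ := μ) hU hdiv]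
  refine forall₄_congr fun ψ hψ hψc hψU => ?_
  have hvar := hasDerivAt_setIntegral_norm_gradient_add_smul (μ := μ) hU hφ hne
    (hψ.of_le (by exact_mod_cast le_top)) hψc hψU
  rw [← neg_eq_zero]
  exact ⟨hvar.unique, fun hzero => hzero ▸ hvar⟩

theorem stmt_13_general [μ.IsAddHaarMeasure] (hU : IsOpen U) (hφ : ContDiffOn ℝ 2 φ U) {c : ℝ}
    (hc : c ≠ 0) (hconst : ∀ x ∈ U, ‖∇ φ x‖ = c) :
    IsTotalNormCriticalOn μ φ U ↔ ∀ x ∈ U, Δ φ x = 0 := by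
  have hne (x : E) (hx : x ∈ U) : ∇ φ x ≠ 0 := norm_ne_zero_iff.1 (hconst x hx ▸ hc)
  rw [isTotalNormCriticalOn_iff_divergence_eq_zero hU hφ hne]
  refine forall₂_congr fun x hx => ?_
  rw [divergence_inv_norm_smul_gradient hU hφ hconst hx, mul_eq_zero_iff_left (inv_ne_zero hc)]

end TotalNorm

theorem stmt_13 (n : ℕ) (hn : 1 ≤ n) (U : Set (EuclideanSpace ℝ (Fin n))) (hU : IsOpen U)
    (φ : EuclideanSpace ℝ (Fin n) → ℝ) (hφ : ContDiffOn ℝ 2 φ U)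
    (c : ℝ) (hc : 0 < c) (hconst : ∀ x ∈ U, ‖gradient φ x‖ = c) :
    (∀ ψ : EuclideanSpace ℝ (Fin n) → ℝ, ContDiff ℝ (⊤ : ℕ∞) ψ → HasCompactSupport ψ →
        tsupport ψ ⊆ U →
        HasDerivAt (fun t : ℝ => ∫ x in tsupport ψ, ‖gradient φ x + t • gradient ψ x‖) 0 0) ↔
      (∀ x ∈ U, (∑ i : Fin n,
          fderiv ℝ (fun y => fderiv ℝ φ y (EuclideanSpace.single i (1:ℝ))) x
            (EuclideanSpace.single i (1:ℝ))) = 0) := by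
  refine (stmt_13_general hU hφ hc.ne' hconst).trans (forall₂_congr fun x hx => ?_)
  simp [laplacian_eq_sum_fderiv_fderiv (EuclideanSpace.basisFun (Fin n) ℝ)
    (hφ.contDiffAt (hU.mem_nhds hx))]
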